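/- arXiv:2309.15771 — 3 statements merged into one kernel-verified Lean document; each statement's English description precedes it below -/
import Mathlib

section
/- Let P be a fixed prior distribution over the policy class Π. For any γ > 0 and δ ∈ (0,1), with probability at least 1-δ the inequality ṽ_n(Q) - v(Q) ≤ (KL(Q‖P) + log(1/δ))/(2γn) holds simultaneously for all distributions Q over Π. -/
/-!
Implicit exploration makes the upper tail of the IX estimator exponentially integrable: for
`π(a|x), ρ ∈ [0,1]`, the inequality `2x / (x + 2) ≤ log (1 + x)` gives
`μ(a|x) exp(2γ π(a|x) ρ / (μ(a|x) + γ)) ≤ μ(a|x) + 2γ π(a|x) ρ` (`mul_exp_ix_le`). Summing over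
actions and integrating, `E exp(2γ (r̃(π) - v(π))) ≤ 1` (`CBSetup.lintegral_exp_le_one`), and by
independence `E exp(2γn (ṽ_n(π) - v(π))) ≤ 1` (`CBSetup.lintegral_exp_ixEst_le_one`).

By Tonelli, the prior average `F(D) = ∫ exp(2γn (ṽ_n(π_θ) - v(π_θ))) dP(θ)` has expectation at
most `1`, so `F < 1/δ` with probability at least `1 - δ` by Markov's inequality. On that event the
Donsker–Varadhan inequality `∫ f dQ ≤ KL(Q‖P) + log ∫ e^f dP` (`integral_le_kl_add_log`), applied
with `f = 2γn (ṽ_n - v)`, gives the bound for all `Q` simultaneously.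
-/

open MeasureTheory ProbabilityTheory

/-- A stochastic contextual bandit instance: context distribution `ν`, behavior policy `μb`,
reward kernel `rker` supported on `[0,1]`, and mean reward function `r`. -/
structure CBSetup (𝓧 𝓐 : Type*) [MeasurableSpace 𝓧] [Fintype 𝓐] [MeasurableSpace 𝓐] where
  /-- the context distribution -/
  ν : Measure 𝓧
  ν_prob : IsProbabilityMeasure ν
  /-- the behavior policy `μ(a|x)` -/
  μb : 𝓧 → 𝓐 → ℝ
  μb_nonneg : ∀ x a, 0 ≤ μb x a
  μb_sum_one : ∀ x, ∑ a, μb x a = 1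
  μb_meas : ∀ a, Measurable fun x => μb x a
  /-- the reward kernel `p(·|x,a)` -/
  rker : 𝓧 → 𝓐 → Measure ℝ
  rker_prob : ∀ x a, IsProbabilityMeasure (rker x a)
  rker_supp : ∀ x a, rker x a (Set.Icc (0:ℝ) 1)ᶜ = 0
  rker_meas : ∀ a, Measurable fun x => rker x a
  /-- the mean reward `r(x,a)` -/
  r : 𝓧 → 𝓐 → ℝ
  r_def : ∀ x a, r x a = ∫ ρ, ρ ∂(rker x a)
  r_meas : ∀ a, Measurable fun x => r x a

variable {𝓧 𝓐 : Type*} [MeasurableSpace 𝓧] [Fintype 𝓐] [MeasurableSpace 𝓐]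
  [MeasurableSingletonClass 𝓐]

/-- The law of a single observation `(X, A, R)` with `X ~ ν`, `A ~ μ(·|X)`, `R ~ p(·|X,A)`. -/
noncomputable def obsLaw (S : CBSetup 𝓧 𝓐) : Measure (𝓧 × 𝓐 × ℝ) :=
  S.ν.bind fun x => Measure.sum fun a =>
    ENNReal.ofReal (S.μb x a) • (S.rker x a).map fun ρ => (x, a, ρ)

/-- The law of the i.i.d. dataset `(X_t, A_t, R_t)_{t=1}^n`. -/
noncomputable def dataLaw (S : CBSetup 𝓧 𝓐) (n : ℕ) : Measure (Fin n → 𝓧 × 𝓐 × ℝ) :=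
  Measure.pi fun _ : Fin n => obsLaw S

/-- A (stochastic, measurable) policy: a map from contexts to distributions over actions. -/
def IsPolicy (π : 𝓧 → 𝓐 → ℝ) : Prop :=
  (∀ x a, 0 ≤ π x a) ∧ (∀ x, ∑ a, π x a = 1) ∧ (∀ a, Measurable fun x => π x a)

/-- The value `v(π) = E[Σ_a π(a|X) r(X,a)]` of a policy. -/
noncomputable def pval (S : CBSetup 𝓧 𝓐) (π : 𝓧 → 𝓐 → ℝ) : ℝ :=
  ∫ x, ∑ a, π x a * S.r x a ∂S.ν

/-- The smoothed coverage ratio `C_γ(π) = E[Σ_a π(a|X) r(X,a)/(μ(a|X)+γ)]`. -/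
noncomputable def covγ (S : CBSetup 𝓧 𝓐) (γ : ℝ) (π : 𝓧 → 𝓐 → ℝ) : ℝ :=
  ∫ x, ∑ a, π x a * S.r x a / (S.μb x a + γ) ∂S.ν

/-- The IX reward estimate `r̃(π) = π(A|X) R / (μ(A|X) + γ)` for one observation `ω = (X,A,R)`. -/
noncomputable def ixTerm (S : CBSetup 𝓧 𝓐) (γ : ℝ) (π : 𝓧 → 𝓐 → ℝ) (ω : 𝓧 × 𝓐 × ℝ) : ℝ :=
  π ω.1 ω.2.1 * ω.2.2 / (S.μb ω.1 ω.2.1 + γ)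

/-- The IX value estimator `ṽ_n(π) = (1/n) Σ_t π(A_t|X_t) R_t / (μ(A_t|X_t) + γ)`. -/
noncomputable def ixEst (S : CBSetup 𝓧 𝓐) (γ : ℝ) {n : ℕ} (π : 𝓧 → 𝓐 → ℝ)
    (D : Fin n → 𝓧 × 𝓐 × ℝ) : ℝ :=
  (∑ t, ixTerm S γ π (D t)) / n

/-- The relative entropy `KL(Q‖P) = ∫ log (dQ/dP) dQ`, as a real number (meaningful whenever
`Q ≪ P` and the log-density is `Q`-integrable, i.e. whenever the KL divergence is finite). -/
noncomputable def klReal {Θ : Type*} [MeasurableSpace Θ] (Q P : Measure Θ) : ℝ :=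
  ∫ θ, Real.log ((Q.rnDeriv P θ).toReal) ∂Q

/-- `KL(Q‖P)` is finite: `Q ≪ P` and the log-density is `Q`-integrable. -/
def KLFinite {Θ : Type*} [MeasurableSpace Θ] (Q P : Measure Θ) : Prop :=
  Q ≪ P ∧ Integrable (fun θ => Real.log ((Q.rnDeriv P θ).toReal)) Q



set_option linter.unusedSectionVars false

/-! ### Two analytic inequalities -/

/-- The scalar inequality behind implicit exploration, with `m = μ(a|x)` and `p = π(a|x)`. For
`m > 0` and `z = pρ` it follows from `2x / (x + 2) ≤ log (1 + x)` at `x = 2γz/m`, where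
the left side equals `2γz / (m + γz) ≥ 2γz / (m + γ)`. Multiplying by `m` covers `m = 0`. -/
lemma mul_exp_ix_le {m p ρ γ : ℝ} (hm : 0 ≤ m) (hp0 : 0 ≤ p) (hp1 : p ≤ 1)
    (hρ0 : 0 ≤ ρ) (hρ1 : ρ ≤ 1) (hγ : 0 < γ) :
    m * Real.exp (2 * γ * (p * ρ / (m + γ))) ≤ m + 2 * γ * (p * ρ) := by
  rcases hm.eq_or_lt with rfl | hm
  · simp only [zero_mul, zero_add]; positivity
  have hz0 : 0 ≤ p * ρ := mul_nonneg hp0 hρ0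
  have hz1 : p * ρ ≤ 1 := mul_le_one₀ hp1 hρ0 hρ1
  generalize p * ρ = z at hz0 hz1 ⊢
  have hx : 0 ≤ 2 * γ * z / m := by positivity
  have h1 : 2 * γ * (z / (m + γ)) ≤ Real.log (1 + 2 * γ * z / m) := by
    refine le_trans ?_ (Real.le_log_one_add_of_nonneg hx)
    have e : 2 * (2 * γ * z / m) / (2 * γ * z / m + 2) = 2 * γ * (z / (m + γ * z)) := by
      field_simp
      ring
    rw [e]
    have : 0 < m + γ * z := by positivity
    gcongr
    nlinarith
  have h2 := (Real.le_log_iff_exp_le (by positivity)).1 h1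
  calc _ ≤ m * (1 + 2 * γ * z / m) := by gcongr
    _ = _ := by field_simp

/-- The Donsker–Varadhan inequality: it is the nonnegativity of the relative entropy of `Q` with
respect to the tilted measure `dP_f ∝ e^f dP`. -/
lemma integral_le_kl_add_log {Θ : Type*} [MeasurableSpace Θ] {Q P : Measure Θ}
    [IsProbabilityMeasure Q] [IsProbabilityMeasure P] (hKL : KLFinite Q P) {f : Θ → ℝ}
    (hfQ : Integrable f Q) (hfP : Integrable (fun θ => Real.exp (f θ)) P) :
    ∫ θ, f θ ∂Q ≤ klReal Q P + Real.log (∫ θ, Real.exp (f θ) ∂P) := by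
  obtain ⟨hac, hint⟩ := hKL
  have := isProbabilityMeasure_tilted hfP
  have h0 := InformationTheory.integral_llr_add_sub_measure_univ_nonneg
    (hac.trans (absolutelyContinuous_tilted hfP))
    (integrable_llr_tilted_right hac hfQ hint hfP)
  rw [integral_llr_tilted_right hac hfQ hfP hint] at h0
  simp only [probReal_univ] at h0
  have : klReal Q P = ∫ θ, llr Q P θ ∂Q := rfl
  linarith

/-! ### Values, the law of an observation, and measurability -/

namespace CBSetup

variable (S : CBSetup 𝓧 𝓐)

lemma ae_mem_Icc (x : 𝓧) (a : 𝓐) : ∀ᵐ ρ ∂(S.rker x a), ρ ∈ Set.Icc (0:ℝ) 1 :=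
  S.rker_supp x a

lemma integrable_id (x : 𝓧) (a : 𝓐) : Integrable (fun ρ => ρ) (S.rker x a) := by
  have := S.rker_prob x a
  exact Integrable.of_mem_Icc 0 1 measurable_id.aemeasurable (S.ae_mem_Icc x a)

lemma r_mem_Icc (x : 𝓧) (a : 𝓐) : S.r x a ∈ Set.Icc (0:ℝ) 1 := by
  have := S.rker_prob x a
  rw [S.r_def]
  refine ⟨integral_nonneg_of_ae ?_, ?_⟩
  · filter_upwards [S.ae_mem_Icc x a] with ρ hρ using hρ.1
  · calc ∫ ρ, ρ ∂(S.rker x a) ≤ ∫ _, (1:ℝ) ∂(S.rker x a) := by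
          refine integral_mono_ae (S.integrable_id x a) (integrable_const _) ?_
          filter_upwards [S.ae_mem_Icc x a] with ρ hρ using hρ.2
      _ = 1 := by simp

lemma sum_mem_Icc {π : 𝓧 → 𝓐 → ℝ} (hπ : IsPolicy π) (x : 𝓧) :
    ∑ a, π x a * S.r x a ∈ Set.Icc (0:ℝ) 1 := by
  refine ⟨Finset.sum_nonneg fun a _ => mul_nonneg (hπ.1 x a) (S.r_mem_Icc x a).1, ?_⟩
  rw [← hπ.2.1 x]
  exact Finset.sum_le_sum fun a _ => mul_le_of_le_one_right (hπ.1 x a) (S.r_mem_Icc x a).2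

lemma integrable_sum {π : 𝓧 → 𝓐 → ℝ} (hπ : IsPolicy π) :
    Integrable (fun x => ∑ a, π x a * S.r x a) S.ν := by
  have := S.ν_prob
  refine Integrable.of_mem_Icc 0 1 (Measurable.aemeasurable ?_)
    (Filter.Eventually.of_forall (S.sum_mem_Icc hπ))
  exact Finset.measurable_sum _ fun a _ => (hπ.2.2 a).mul (S.r_meas a)

lemma pval_mem_Icc {π : 𝓧 → 𝓐 → ℝ} (hπ : IsPolicy π) : pval S π ∈ Set.Icc (0:ℝ) 1 := by
  have := S.ν_prob
  refine ⟨integral_nonneg fun x => (S.sum_mem_Icc hπ x).1, ?_⟩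
  calc pval S π ≤ ∫ _, (1:ℝ) ∂S.ν :=
        integral_mono (S.integrable_sum hπ) (integrable_const _) fun x => (S.sum_mem_Icc hπ x).2
    _ = 1 := by simp

/-- The conditional law of an observation given its context is a measurable function of the
context, so the Giry bind in `obsLaw` is not a junk value. -/
lemma measurable_condLaw : Measurable fun x => Measure.sum fun a =>
    ENNReal.ofReal (S.μb x a) • (S.rker x a).map fun ρ => (x, a, ρ) := by
  refine Measure.measurable_of_measurable_coe _ fun s hs => ?_
  simp only [Measure.sum_apply _ hs, tsum_fintype, Measure.smul_apply, smul_eq_mul]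
  refine Finset.measurable_sum _ fun a _ => (S.μb_meas a).ennreal_ofReal.mul ?_
  let κ : Kernel 𝓧 ℝ := ⟨fun x => S.rker x a, S.rker_meas a⟩
  have : IsMarkovKernel κ := ⟨fun x => S.rker_prob x a⟩
  have hm : Measurable fun q : 𝓧 × ℝ => (q.1, a, q.2) := by fun_prop
  have := Kernel.measurable_kernel_prodMk_left (κ := κ) (hm hs)
  convert this using 2 with x
  rw [Measure.map_apply (by fun_prop) hs]
  rfl

lemma lintegral_obsLaw {g : 𝓧 × 𝓐 × ℝ → ENNReal} (hg : Measurable g) :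
    ∫⁻ ω, g ω ∂(obsLaw S) =
      ∫⁻ x, ∑ a, ENNReal.ofReal (S.μb x a) * ∫⁻ ρ, g (x, a, ρ) ∂(S.rker x a) ∂S.ν := by
  rw [obsLaw, Measure.lintegral_bind S.measurable_condLaw.aemeasurable hg.aemeasurable]
  refine lintegral_congr fun x => ?_
  rw [lintegral_sum_measure, tsum_fintype]
  refine Finset.sum_congr rfl fun a _ => ?_
  rw [lintegral_smul_measure, lintegral_map hg (by fun_prop), smul_eq_mul]

lemma isProbabilityMeasure_obsLaw : IsProbabilityMeasure (obsLaw S) := by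
  have := S.ν_prob
  have := S.rker_prob
  constructor
  rw [← lintegral_one, S.lintegral_obsLaw measurable_const]
  simp only [lintegral_const, measure_univ, mul_one]
  simp_rw [← ENNReal.ofReal_sum_of_nonneg fun a _ => S.μb_nonneg _ a, S.μb_sum_one]
  simp

lemma measurable_ixTerm {Θ : Type*} [MeasurableSpace Θ] (γ : ℝ) {pf : Θ → 𝓧 → 𝓐 → ℝ}
    (hpfm : ∀ a, Measurable fun q : Θ × 𝓧 => pf q.1 q.2 a) :
    Measurable fun q : Θ × (𝓧 × 𝓐 × ℝ) => ixTerm S γ (pf q.1) q.2 := by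
  have h : Measurable fun q : (Θ × 𝓧 × ℝ) × 𝓐 => pf q.1.1 q.1.2.1 q.2 * q.1.2.2 /
      (S.μb q.1.2.1 q.2 + γ) := by
    refine measurable_from_prod_countable_left fun a => ?_
    have h1 : Measurable fun q : Θ × 𝓧 × ℝ => pf q.1 q.2.1 a :=
      (hpfm a).comp (f := fun q : Θ × 𝓧 × ℝ => (q.1, q.2.1)) (by fun_prop)
    have h2 : Measurable fun q : Θ × 𝓧 × ℝ => S.μb q.2.1 a :=
      (S.μb_meas a).comp (by fun_prop)
    exact (h1.mul (by fun_prop)).div (h2.add_const _)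
  exact h.comp (f := fun q : Θ × (𝓧 × 𝓐 × ℝ) => ((q.1, q.2.1, q.2.2.2), q.2.2.1)) (by fun_prop)

lemma measurable_pval {Θ : Type*} [MeasurableSpace Θ] {pf : Θ → 𝓧 → 𝓐 → ℝ}
    (hpfm : ∀ a, Measurable fun q : Θ × 𝓧 => pf q.1 q.2 a) :
    Measurable fun θ => pval S (pf θ) := by
  have := S.ν_prob
  have h : Measurable fun q : Θ × 𝓧 => ∑ a, pf q.1 q.2 a * S.r q.2 a :=
    Finset.measurable_sum _ fun a _ => (hpfm a).mul ((S.r_meas a).comp measurable_snd)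
  exact h.stronglyMeasurable.integral_prod_right'.measurable

lemma policy_le_one {π : 𝓧 → 𝓐 → ℝ} (hπ : IsPolicy π) (x : 𝓧) (a : 𝓐) : π x a ≤ 1 := by
  rw [← hπ.2.1 x]
  exact Finset.single_le_sum (fun b _ => hπ.1 x b) (Finset.mem_univ a)

/-- A bound on the IX term that is uniform over policies and holds for every observation, including
those with a reward outside `[0,1]`. -/
lemma abs_ixTerm_le {γ : ℝ} (hγ : 0 < γ) {π : 𝓧 → 𝓐 → ℝ} (hπ : IsPolicy π)
    (ω : 𝓧 × 𝓐 × ℝ) : |ixTerm S γ π ω| ≤ |ω.2.2| / γ := by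
  have h0 := S.μb_nonneg ω.1 ω.2.1
  have h1 : 0 < S.μb ω.1 ω.2.1 + γ := by linarith
  rw [ixTerm, abs_div, abs_mul, abs_of_nonneg (hπ.1 _ _), abs_of_pos h1]
  gcongr
  · exact mul_le_of_le_one_left (abs_nonneg _) (policy_le_one hπ _ _)
  · linarith

/-! ### Exponential moments -/

/-- Exponential moment of one IX estimate: integrating `mul_exp_ix_le` over the reward and summing
over actions gives `E[exp(2γ r̃(π))] ≤ 1 + 2γ v(π) ≤ exp(2γ v(π))`. -/
lemma lintegral_exp_le_one {γ : ℝ} (hγ : 0 < γ) {π : 𝓧 → 𝓐 → ℝ} (hπ : IsPolicy π) :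
    ∫⁻ ω, ENNReal.ofReal (Real.exp (2 * γ * (ixTerm S γ π ω - pval S π))) ∂(obsLaw S) ≤ 1 := by
  have := S.ν_prob
  have hm : Measurable fun ω => ixTerm S γ π ω :=
    (S.measurable_ixTerm γ (pf := fun _ : Unit => π)
      (fun a => (hπ.2.2 a).comp measurable_snd)).comp (measurable_prodMk_left (x := ()))
  have hv := S.pval_mem_Icc hπ
  have key : ∫⁻ ω, ENNReal.ofReal (Real.exp (2 * γ * ixTerm S γ π ω)) ∂(obsLaw S) ≤
      ENNReal.ofReal (1 + 2 * γ * pval S π) := by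
    rw [S.lintegral_obsLaw (by fun_prop)]
    have hb : ∀ x, ∑ a, ENNReal.ofReal (S.μb x a) *
        ∫⁻ ρ, ENNReal.ofReal (Real.exp (2 * γ * ixTerm S γ π (x, a, ρ))) ∂(S.rker x a) ≤
        ENNReal.ofReal (1 + 2 * γ * ∑ a, π x a * S.r x a) := by
      intro x
      rw [← S.μb_sum_one x, Finset.mul_sum, ← Finset.sum_add_distrib, ENNReal.ofReal_sum_of_nonneg]
      · refine Finset.sum_le_sum fun a _ => ?_
        have := S.rker_prob x a
        have hi : Integrable (fun ρ => S.μb x a + 2 * γ * (π x a * ρ)) (S.rker x a) :=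
          (integrable_const _).add (((S.integrable_id x a).const_mul _).const_mul _)
        have hr : S.μb x a + 2 * γ * (π x a * S.r x a) =
            ∫ ρ, (S.μb x a + 2 * γ * (π x a * ρ)) ∂(S.rker x a) := by
          rw [integral_add (integrable_const _) (((S.integrable_id x a).const_mul _).const_mul _),
            integral_const_mul, integral_const_mul, ← S.r_def]
          simp
        rw [← lintegral_const_mul' _ _ ENNReal.ofReal_ne_top, hr,
          ofReal_integral_eq_lintegral_ofReal hi]
        · refine lintegral_mono_ae ?_
          filter_upwards [S.ae_mem_Icc x a] with ρ hρ
          rw [← ENNReal.ofReal_mul (S.μb_nonneg x a)]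
          exact ENNReal.ofReal_le_ofReal (mul_exp_ix_le (S.μb_nonneg x a) (hπ.1 x a)
            (policy_le_one hπ x a) hρ.1 hρ.2 hγ)
        · filter_upwards [S.ae_mem_Icc x a] with ρ hρ
          have h1 := S.μb_nonneg x a
          have h2 := hπ.1 x a
          have h3 := hρ.1
          simp only [Pi.zero_apply]
          positivity
      · intro a _
        have h1 := S.μb_nonneg x a
        have h2 := hπ.1 x a
        have h3 := (S.r_mem_Icc x a).1
        positivity
    refine (lintegral_mono hb).trans_eq ?_
    rw [← ofReal_integral_eq_lintegral_ofReal]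
    · rw [integral_add (integrable_const _) ((S.integrable_sum hπ).const_mul _),
        integral_const_mul]
      simp [pval]
    · exact (integrable_const _).add ((S.integrable_sum hπ).const_mul _)
    · refine Filter.Eventually.of_forall fun x => ?_
      have := (S.sum_mem_Icc hπ x).1
      simp only [Pi.zero_apply]
      positivity
  calc _ = ∫⁻ ω, ENNReal.ofReal (Real.exp (-(2 * γ * pval S π))) *
        ENNReal.ofReal (Real.exp (2 * γ * ixTerm S γ π ω)) ∂(obsLaw S) := by
        refine lintegral_congr fun ω => ?_
        rw [← ENNReal.ofReal_mul (Real.exp_nonneg _), ← Real.exp_add]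
        ring_nf
    _ ≤ ENNReal.ofReal (Real.exp (-(2 * γ * pval S π))) *
        ENNReal.ofReal (Real.exp (2 * γ * pval S π)) := by
        rw [lintegral_const_mul' _ _ ENNReal.ofReal_ne_top]
        gcongr
        refine key.trans (ENNReal.ofReal_le_ofReal ?_)
        linarith [Real.add_one_le_exp (2 * γ * pval S π)]
    _ = 1 := by
        rw [← ENNReal.ofReal_mul (Real.exp_nonneg _), ← Real.exp_add]
        simp

lemma isProbabilityMeasure_dataLaw (n : ℕ) : IsProbabilityMeasure (dataLaw S n) := by
  have := S.isProbabilityMeasure_obsLaw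
  unfold dataLaw
  infer_instance

/-- Exponential moment of the IX estimator: by independence it is the product of `n` factors, each
controlled by `lintegral_exp_le_one`. -/
lemma lintegral_exp_ixEst_le_one {γ : ℝ} (hγ : 0 < γ) {π : 𝓧 → 𝓐 → ℝ} (hπ : IsPolicy π)
    {n : ℕ} (hn : 0 < n) :
    ∫⁻ D, ENNReal.ofReal (Real.exp (2 * γ * n * (ixEst S γ π D - pval S π))) ∂(dataLaw S n)
      ≤ 1 := by
  have := S.isProbabilityMeasure_obsLaw
  have hm : Measurable fun ω => ixTerm S γ π ω :=
    (S.measurable_ixTerm γ (pf := fun _ : Unit => π)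
      (fun a => (hπ.2.2 a).comp measurable_snd)).comp (measurable_prodMk_left (x := ()))
  let g : 𝓧 × 𝓐 × ℝ → ENNReal := fun ω =>
    ENNReal.ofReal (Real.exp (2 * γ * (ixTerm S γ π ω - pval S π)))
  have hg : Measurable g := by fun_prop
  have hprod : ∀ D : Fin n → 𝓧 × 𝓐 × ℝ,
      ENNReal.ofReal (Real.exp (2 * γ * n * (ixEst S γ π D - pval S π))) = ∏ t, g (D t) := by
    intro D
    rw [← ENNReal.ofReal_prod_of_nonneg fun _ _ => Real.exp_nonneg _, ← Real.exp_sum,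
      ← Finset.mul_sum, Finset.sum_sub_distrib]
    have : (n : ℝ) ≠ 0 := by positivity
    simp only [ixEst, Finset.sum_const, Finset.card_univ, Fintype.card_fin, nsmul_eq_mul]
    congr 2
    field_simp
  simp_rw [hprod, dataLaw]
  have hind : iIndepFun (fun (t : Fin n) (D : Fin n → 𝓧 × 𝓐 × ℝ) => g (D t))
      (Measure.pi fun _ => obsLaw S) := iIndepFun_pi fun _ => hg.aemeasurable
  have h := lintegral_prod_eq_prod_lintegral_of_indepFun Finset.univ _ hind
    fun t => hg.comp (measurable_pi_apply t)
  rw [h]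
  refine Finset.prod_le_one' fun t _ => ?_
  have := (measurePreserving_eval (fun _ : Fin n => obsLaw S) t).lintegral_comp hg
  simp only [Function.eval] at this
  rw [this]
  exact S.lintegral_exp_le_one hγ hπ

end CBSetup

/-! ### The PAC-Bayesian bound -/

/-- Lemma 3, PAC-Bayesian upper tail: with probability at least `1-δ`,
simultaneously for all distributions `Q` over the policy class (those with infinite
`KL(Q‖P)` satisfy the bound vacuously),
`ṽ_n(Q) - v(Q) ≤ (KL(Q‖P) + log(1/δ))/(2γn)`. -/
theorem ix_upper_tail_pac_bayes
    (S : CBSetup 𝓧 𝓐) {Θ : Type*} [MeasurableSpace Θ]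
    (pf : Θ → 𝓧 → 𝓐 → ℝ) (hpf : ∀ θ, IsPolicy (pf θ))
    (hpfm : ∀ a, Measurable fun q : Θ × 𝓧 => pf q.1 q.2 a)
    {n : ℕ} (hn : 0 < n) (γ δ : ℝ) (hγ : 0 < γ) (hδ0 : 0 < δ) (hδ1 : δ < 1)
    (P : Measure Θ) (hP : IsProbabilityMeasure P) :
    ENNReal.ofReal (1 - δ) ≤
      dataLaw S n {D : Fin n → 𝓧 × 𝓐 × ℝ |
        ∀ Q : Measure Θ, IsProbabilityMeasure Q → KLFinite Q P →
          (∫ θ, ixEst S γ (pf θ) D ∂Q) - (∫ θ, pval S (pf θ) ∂Q) ≤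
            (klReal Q P + Real.log (1 / δ)) / (2 * γ * n)} := by
  have := S.isProbabilityMeasure_dataLaw n
  have hn' : (0 : ℝ) < n := by exact_mod_cast hn
  have hest : Measurable fun q : Θ × (Fin n → 𝓧 × 𝓐 × ℝ) => ixEst S γ (pf q.1) q.2 := by
    refine (Finset.measurable_sum _ fun t _ => ?_).div_const _
    exact (S.measurable_ixTerm γ hpfm).comp
      (f := fun q : Θ × (Fin n → 𝓧 × 𝓐 × ℝ) => (q.1, q.2 t)) (by fun_prop)
  have hval := S.measurable_pval hpfm
  let f : (Fin n → 𝓧 × 𝓐 × ℝ) → Θ → ℝ := fun D θ =>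
    2 * γ * n * (ixEst S γ (pf θ) D - pval S (pf θ))
  have hf : Measurable fun q : Θ × (Fin n → 𝓧 × 𝓐 × ℝ) => f q.2 q.1 :=
    (hest.sub (hval.comp measurable_fst)).const_mul _
  have hF2 : Measurable fun q : Θ × (Fin n → 𝓧 × 𝓐 × ℝ) =>
      ENNReal.ofReal (Real.exp (f q.2 q.1)) := hf.exp.ennreal_ofReal
  -- `F` involves only the prior, so a single event `F < 1/δ` serves every posterior `Q` at once.
  let F : (Fin n → 𝓧 × 𝓐 × ℝ) → ENNReal := fun D =>
    ∫⁻ θ, ENNReal.ofReal (Real.exp (f D θ)) ∂P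
  have hF : Measurable F := hF2.lintegral_prod_left'
  have hF1 : ∫⁻ D, F D ∂(dataLaw S n) ≤ 1 := by
    simp only [F]
    rw [lintegral_lintegral_swap (f := fun D θ => ENNReal.ofReal (Real.exp (f D θ)))
      (hF2.comp measurable_swap).aemeasurable]
    calc _ ≤ ∫⁻ _, 1 ∂P := lintegral_mono fun θ =>
          S.lintegral_exp_ixEst_le_one hγ (hpf θ) hn
      _ = 1 := by simp
  have hbad : dataLaw S n {D | ENNReal.ofReal (1 / δ) ≤ F D} ≤ ENNReal.ofReal δ := by
    have h := (mul_meas_ge_le_lintegral hF (ENNReal.ofReal (1 / δ))).trans hF1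
    calc _ = ENNReal.ofReal δ * (ENNReal.ofReal (1 / δ) *
          dataLaw S n {D | ENNReal.ofReal (1 / δ) ≤ F D}) := by
          rw [← mul_assoc, ← ENNReal.ofReal_mul hδ0.le, mul_one_div_cancel hδ0.ne']
          simp
      _ ≤ ENNReal.ofReal δ * 1 := by gcongr
      _ = _ := mul_one _
  have hgood : ENNReal.ofReal (1 - δ) ≤ dataLaw S n {D | ENNReal.ofReal (1 / δ) ≤ F D}ᶜ := by
    rw [prob_compl_eq_one_sub (measurableSet_le measurable_const hF),
      ENNReal.ofReal_sub _ hδ0.le, ENNReal.ofReal_one]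
    gcongr
  -- The target event need not be measurable; a measurable subset of it suffices.
  refine hgood.trans (measure_mono fun D hD Q hQ hKL => ?_)
  simp only [Set.mem_compl_iff, Set.mem_ofPred_eq, not_le] at hD
  -- For fixed `D` every integrand is bounded in `θ`, whether or not the rewards lie in `[0,1]`.
  have hestD : Measurable fun θ => ixEst S γ (pf θ) D :=
    hest.comp (f := fun θ => (θ, D)) (by fun_prop)
  have hbest : ∀ θ, ‖ixEst S γ (pf θ) D‖ ≤ (∑ t, |(D t).2.2| / γ) / n := by
    intro θ
    rw [ixEst, Real.norm_eq_abs, abs_div, abs_of_pos hn']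
    gcongr
    exact (Finset.abs_sum_le_sum_abs _ _).trans
      (Finset.sum_le_sum fun t _ => S.abs_ixTerm_le hγ (hpf θ) (D t))
  have hbval : ∀ θ, ‖pval S (pf θ)‖ ≤ 1 := fun θ => by
    have := S.pval_mem_Icc (hpf θ)
    rw [Real.norm_eq_abs, abs_of_nonneg this.1]
    exact this.2
  have hiest : Integrable (fun θ => ixEst S γ (pf θ) D) Q :=
    .of_bound hestD.aestronglyMeasurable _ (.of_forall hbest)
  have hival : Integrable (fun θ => pval S (pf θ)) Q :=
    .of_bound hval.aestronglyMeasurable _ (.of_forall hbval)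
  have hfD : Measurable (f D) := hf.comp (f := fun θ => (θ, D)) (by fun_prop)
  have hexp : Integrable (fun θ => Real.exp (f D θ)) P := by
    refine .of_bound hfD.exp.aestronglyMeasurable
      (Real.exp (2 * γ * n * ((∑ t, |(D t).2.2| / γ) / n))) (.of_forall fun θ => ?_)
    rw [Real.norm_eq_abs, Real.abs_exp]
    simp only [f]
    gcongr
    linarith [(S.pval_mem_Icc (hpf θ)).1, (le_abs_self _).trans (hbest θ)]
  have hDV := integral_le_kl_add_log hKL (f := f D) ((hiest.sub hival).const_mul _) hexp
  have hlog : Real.log (∫ θ, Real.exp (f D θ) ∂P) ≤ Real.log (1 / δ) := by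
    refine Real.log_le_log (integral_exp_pos hexp) ?_
    have h : ENNReal.ofReal (∫ θ, Real.exp (f D θ) ∂P) < ENNReal.ofReal (1 / δ) := by
      rwa [ofReal_integral_eq_lintegral_ofReal hexp (.of_forall fun _ => Real.exp_nonneg _)]
    exact ((ENNReal.ofReal_lt_ofReal_iff (by positivity)).1 h).le
  have hint : ∫ θ, f D θ ∂Q =
      2 * γ * n * ((∫ θ, ixEst S γ (pf θ) D ∂Q) - ∫ θ, pval S (pf θ) ∂Q) := by
    simp only [f]
    rw [integral_const_mul, integral_sub hiest hival]
  rw [le_div_iff₀ (by positivity)]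
  linarith
end

section
/- Let P be a fixed prior distribution over the policy class Π. For any γ > 0 and δ ∈ (0,1), with probability at least 1-δ the inequality v(Q) - ṽ_n(Q) ≤ (KL(Q‖P) + log(1/δ))/(2γn) + 2γ·C_γ(Q) holds simultaneously for all distributions Q over Π. -/
/-!
The proof is the exponential-moment form of the PAC-Bayes argument, run at the scale `λ = 2γ`.

For one policy `π`, let `Z = π(A|X) R / (μ(A|X) + γ)`. The inequality `exp (-y) ≤ 1 - y + y²/2` for
`y ≥ 0` reduces the Laplace transform of `Z` to its first two moments. The implicit-exploration
bias is exactly `E Z = v(π) - γ C_γ(π)`, and `E Z² ≤ C_γ(π)` because `π ≤ 1`, `R² ≤ R` and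
`μ ≤ μ + γ`. Hence `E exp (-2γ Z) ≤ 1 - 2γ v(π) + 4γ² C_γ(π)`, which with `1 + u ≤ exp u` gives
`E exp (2γ (v(π) - Z) - 4γ² C_γ(π)) ≤ 1` (`ix_exp_moment_le_one`). Independence extends this to the
sample, and Tonelli to the mixture over the prior (`lintegral_priorMixture_le_one`).

By Markov's inequality the mixture is below `1/δ` with probability at least `1 - δ`. On that single
event the Donsker–Varadhan inequality (`donsker_varadhan`) transfers the bound from `P` to every
posterior `Q` with finite relative entropy (`pac_bayes_of_priorMixture_lt`).
-/


open MeasureTheory ProbabilityTheory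

variable {𝓧 𝓐 : Type*} [MeasurableSpace 𝓧] [Fintype 𝓐] [MeasurableSpace 𝓐]
  [MeasurableSingletonClass 𝓐]

set_option linter.unusedSectionVars false

/-! ### Two general inequalities -/

/-- The second-order Taylor upper bound for `exp (-y)` on the half-line `y ≥ 0`. -/
lemma exp_neg_le_quadratic {y : ℝ} (hy : 0 ≤ y) : Real.exp (-y) ≤ 1 - y + y ^ 2 / 2 := by
  have h := Real.quadratic_le_exp_of_nonneg hy
  rw [Real.exp_neg, inv_le_iff_one_le_mul₀ (Real.exp_pos y)]
  have h0 : 0 ≤ 1 - y + y ^ 2 / 2 := by nlinarith [sq_nonneg (y - 1)]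
  nlinarith [mul_le_mul_of_nonneg_left h h0, sq_nonneg (y ^ 2)]

/-- The Donsker–Varadhan inequality; it is Gibbs' inequality for `Q` against the tilted measure
`P.tilted F`. -/
lemma donsker_varadhan {Θ : Type*} [MeasurableSpace Θ] {P Q : Measure Θ}
    [IsProbabilityMeasure P] [IsProbabilityMeasure Q] (hKL : KLFinite Q P) {F : Θ → ℝ}
    (hFQ : Integrable F Q) (hFP : Integrable (fun θ => Real.exp (F θ)) P) :
    ∫ θ, F θ ∂Q ≤ klReal Q P + Real.log (∫ θ, Real.exp (F θ) ∂P) := by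
  have := isProbabilityMeasure_tilted hFP
  have h := InformationTheory.integral_llr_add_sub_measure_univ_nonneg
    (hKL.1.trans (absolutelyContinuous_tilted hFP))
    (integrable_llr_tilted_right hKL.1 hFQ hKL.2 hFP)
  rw [integral_llr_tilted_right hKL.1 hFQ hFP hKL.2] at h
  have hk : klReal Q P = ∫ θ, llr Q P θ ∂Q := rfl
  simp only [probReal_univ] at h
  linarith

/-! ### The law of one observation -/

lemma measurable_obs_kernel (S : CBSetup 𝓧 𝓐) : Measurable fun x => Measure.sum fun a =>
    ENNReal.ofReal (S.μb x a) • (S.rker x a).map fun ρ => (x, a, ρ) := by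
  refine Measure.measurable_of_measurable_coe _ fun s hs => ?_
  have hmap : ∀ (a : 𝓐), Measurable fun p : 𝓧 × ℝ => (p.1, a, p.2) := fun a => by fun_prop
  simp only [Measure.sum_apply _ hs, Measure.smul_apply, smul_eq_mul, tsum_fintype]
  refine Finset.measurable_sum _ fun a _ => ((S.μb_meas a).ennreal_ofReal).mul ?_
  let κ : Kernel 𝓧 ℝ := ⟨fun x => S.rker x a, S.rker_meas a⟩
  have : IsMarkovKernel κ := ⟨fun x => S.rker_prob x a⟩
  have h := Kernel.measurable_kernel_prodMk_left (κ := κ) (hmap a hs)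
  convert h using 2 with x
  rw [Measure.map_apply (by fun_prop) hs]
  rfl

lemma lintegral_obsLaw (S : CBSetup 𝓧 𝓐) {f : 𝓧 × 𝓐 × ℝ → ENNReal} (hf : Measurable f) :
    ∫⁻ ω, f ω ∂(obsLaw S) =
      ∫⁻ x, ∑ a, ENNReal.ofReal (S.μb x a) * ∫⁻ ρ, f (x, a, ρ) ∂(S.rker x a) ∂S.ν := by
  rw [obsLaw, Measure.lintegral_bind (measurable_obs_kernel S).aemeasurable hf.aemeasurable]
  refine lintegral_congr fun x => ?_
  rw [lintegral_sum_measure, tsum_fintype]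
  refine Finset.sum_congr rfl fun a _ => ?_
  rw [lintegral_smul_measure, lintegral_map hf (by fun_prop), smul_eq_mul]

lemma isProbabilityMeasure_obsLaw (S : CBSetup 𝓧 𝓐) : IsProbabilityMeasure (obsLaw S) := by
  have := S.ν_prob
  have := S.rker_prob
  refine ⟨?_⟩
  have h := lintegral_obsLaw S (f := fun _ => 1) measurable_const
  have hs : ∀ x, ∑ a, ENNReal.ofReal (S.μb x a) = 1 := fun x => by
    rw [← ENNReal.ofReal_sum_of_nonneg fun a _ => S.μb_nonneg x a, S.μb_sum_one,
      ENNReal.ofReal_one]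
  simpa [hs] using h

lemma reward_ae_mem_Icc (S : CBSetup 𝓧 𝓐) (x : 𝓧) (a : 𝓐) :
    ∀ᵐ ρ ∂(S.rker x a), ρ ∈ Set.Icc (0 : ℝ) 1 := by
  exact S.rker_supp x a

lemma integrable_reward (S : CBSetup 𝓧 𝓐) (x : 𝓧) (a : 𝓐) :
    Integrable (fun ρ : ℝ => ρ) (S.rker x a) := by
  have := S.rker_prob x a
  refine Integrable.of_bound aestronglyMeasurable_id 1 ?_
  filter_upwards [reward_ae_mem_Icc S x a] with ρ hρ
  rw [Real.norm_eq_abs, abs_le]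
  exact ⟨by linarith [hρ.1], hρ.2⟩

lemma r_mem_Icc (S : CBSetup 𝓧 𝓐) (x : 𝓧) (a : 𝓐) : S.r x a ∈ Set.Icc (0 : ℝ) 1 := by
  have := S.rker_prob x a
  rw [S.r_def]
  constructor
  · exact integral_nonneg_of_ae ((reward_ae_mem_Icc S x a).mono fun ρ h => h.1)
  · calc ∫ ρ, ρ ∂(S.rker x a) ≤ ∫ _, (1 : ℝ) ∂(S.rker x a) :=
          integral_mono_ae (integrable_reward S x a) (integrable_const _)
            ((reward_ae_mem_Icc S x a).mono fun ρ h => h.2)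
      _ = 1 := by simp

/-- The Laplace transform of a `[0,1]`-valued reward, bounded to second order using `ρ² ≤ ρ`. -/
lemma lintegral_exp_neg_reward_le (S : CBSetup 𝓧 𝓐) (x : 𝓧) (a : 𝓐) {c : ℝ} (hc : 0 ≤ c) :
    ∫⁻ ρ, ENNReal.ofReal (Real.exp (-(c * ρ))) ∂(S.rker x a) ≤
      ENNReal.ofReal (1 - c * S.r x a + c ^ 2 / 2 * S.r x a) := by
  have := S.rker_prob x a
  have hint := integrable_reward S x a
  have hle : ∀ᵐ ρ ∂(S.rker x a), Real.exp (-(c * ρ)) ≤ 1 - c * ρ + c ^ 2 / 2 * ρ := by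
    filter_upwards [reward_ae_mem_Icc S x a] with ρ hρ
    have h1 := exp_neg_le_quadratic (mul_nonneg hc hρ.1)
    nlinarith [mul_nonneg (sq_nonneg c) (mul_nonneg hρ.1 (sub_nonneg.2 hρ.2))]
  have hi : Integrable (fun ρ : ℝ => 1 - c * ρ + c ^ 2 / 2 * ρ) (S.rker x a) :=
    ((integrable_const _).sub (hint.const_mul _)).add (hint.const_mul _)
  have hval : ∫ ρ, (1 - c * ρ + c ^ 2 / 2 * ρ) ∂(S.rker x a) =
      1 - c * S.r x a + c ^ 2 / 2 * S.r x a := by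
    have h1 : Integrable (fun ρ : ℝ => 1 - c * ρ) (S.rker x a) :=
      (integrable_const _).sub (hint.const_mul _)
    rw [integral_add h1 (hint.const_mul _),
      integral_sub (integrable_const _) (hint.const_mul _), integral_const_mul,
      integral_const_mul, ← S.r_def]
    simp
  rw [← hval, ofReal_integral_eq_lintegral_ofReal hi
    (hle.mono fun ρ h => (Real.exp_pos _).le.trans h)]
  exact lintegral_mono_ae (hle.mono fun ρ h => ENNReal.ofReal_le_ofReal h)

/-! ### The exponential moment of the IX estimate of one policy -/

lemma IsPolicy.le_one {π : 𝓧 → 𝓐 → ℝ} (hπ : IsPolicy π) (x : 𝓧) (a : 𝓐) : π x a ≤ 1 := by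
  rw [← hπ.2.1 x]
  exact Finset.single_le_sum (fun b _ => hπ.1 x b) (Finset.mem_univ a)

lemma value_integrand_mem_Icc (S : CBSetup 𝓧 𝓐) {π : 𝓧 → 𝓐 → ℝ} (hπ : IsPolicy π) (x : 𝓧) :
    ∑ a, π x a * S.r x a ∈ Set.Icc (0 : ℝ) 1 := by
  constructor
  · exact Finset.sum_nonneg fun a _ => mul_nonneg (hπ.1 x a) (r_mem_Icc S x a).1
  · rw [← hπ.2.1 x]
    exact Finset.sum_le_sum fun a _ => mul_le_of_le_one_right (hπ.1 x a) (r_mem_Icc S x a).2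

lemma cov_integrand_mem_Icc (S : CBSetup 𝓧 𝓐) {γ : ℝ} (hγ : 0 < γ) {π : 𝓧 → 𝓐 → ℝ}
    (hπ : IsPolicy π) (x : 𝓧) :
    ∑ a, π x a * S.r x a / (S.μb x a + γ) ∈ Set.Icc (0 : ℝ) (1 / γ) := by
  have hnn : ∀ a, 0 ≤ π x a * S.r x a := fun a => mul_nonneg (hπ.1 x a) (r_mem_Icc S x a).1
  constructor
  · exact Finset.sum_nonneg fun a _ => div_nonneg (hnn a) (by linarith [S.μb_nonneg x a])
  · calc ∑ a, π x a * S.r x a / (S.μb x a + γ) ≤ ∑ a, π x a * S.r x a / γ :=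
          Finset.sum_le_sum fun a _ =>
            div_le_div_of_nonneg_left (hnn a) hγ (by linarith [S.μb_nonneg x a])
      _ = (∑ a, π x a * S.r x a) / γ := (Finset.sum_div _ _ _).symm
      _ ≤ 1 / γ := by
          gcongr
          exact (value_integrand_mem_Icc S hπ x).2

lemma integrable_value_integrand (S : CBSetup 𝓧 𝓐) {π : 𝓧 → 𝓐 → ℝ} (hπ : IsPolicy π) :
    Integrable (fun x => ∑ a, π x a * S.r x a) S.ν := by
  have := S.ν_prob
  refine Integrable.of_mem_Icc 0 1 ?_ (ae_of_all _ (value_integrand_mem_Icc S hπ))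
  exact (Finset.measurable_sum _ fun a _ => (hπ.2.2 a).mul (S.r_meas a)).aemeasurable

lemma integrable_cov_integrand (S : CBSetup 𝓧 𝓐) {γ : ℝ} (hγ : 0 < γ) {π : 𝓧 → 𝓐 → ℝ}
    (hπ : IsPolicy π) :
    Integrable (fun x => ∑ a, π x a * S.r x a / (S.μb x a + γ)) S.ν := by
  have := S.ν_prob
  refine Integrable.of_mem_Icc 0 (1 / γ) ?_ (ae_of_all _ (cov_integrand_mem_Icc S hγ hπ))
  exact (Finset.measurable_sum _ fun a _ =>
    ((hπ.2.2 a).mul (S.r_meas a)).div ((S.μb_meas a).add_const γ)).aemeasurable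

lemma pval_mem_Icc (S : CBSetup 𝓧 𝓐) {π : 𝓧 → 𝓐 → ℝ} (hπ : IsPolicy π) :
    pval S π ∈ Set.Icc (0 : ℝ) 1 := by
  have := S.ν_prob
  refine ⟨integral_nonneg fun x => (value_integrand_mem_Icc S hπ x).1, ?_⟩
  calc pval S π ≤ ∫ _, (1 : ℝ) ∂S.ν :=
        integral_mono (integrable_value_integrand S hπ) (integrable_const _)
          fun x => (value_integrand_mem_Icc S hπ x).2
    _ = 1 := by simp

lemma covγ_mem_Icc (S : CBSetup 𝓧 𝓐) {γ : ℝ} (hγ : 0 < γ) {π : 𝓧 → 𝓐 → ℝ} (hπ : IsPolicy π) :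
    covγ S γ π ∈ Set.Icc (0 : ℝ) (1 / γ) := by
  have := S.ν_prob
  refine ⟨integral_nonneg fun x => (cov_integrand_mem_Icc S hγ hπ x).1, ?_⟩
  calc covγ S γ π ≤ ∫ _, (1 / γ : ℝ) ∂S.ν :=
        integral_mono (integrable_cov_integrand S hγ hπ) (integrable_const _)
          fun x => (cov_integrand_mem_Icc S hγ hπ x).2
    _ = 1 / γ := by simp

/-- Joint measurability of the IX estimate in the policy parameter and the observation. -/
lemma measurable_ixTerm_param (S : CBSetup 𝓧 𝓐) {Θ : Type*} [MeasurableSpace Θ]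
    {pf : Θ → 𝓧 → 𝓐 → ℝ} (hpfm : ∀ a, Measurable fun q : Θ × 𝓧 => pf q.1 q.2 a) (γ : ℝ) :
    Measurable fun p : Θ × 𝓧 × 𝓐 × ℝ => ixTerm S γ (pf p.1) p.2 := by
  have hπ : Measurable fun q : (Θ × 𝓧) × 𝓐 => pf q.1.1 q.1.2 q.2 :=
    measurable_from_prod_countable_left hpfm
  have hμ : Measurable fun q : 𝓧 × 𝓐 => S.μb q.1 q.2 :=
    measurable_from_prod_countable_left S.μb_meas
  have h1 : Measurable fun p : Θ × 𝓧 × 𝓐 × ℝ => pf p.1 p.2.1 p.2.2.1 :=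
    hπ.comp (g := fun q : (Θ × 𝓧) × 𝓐 => pf q.1.1 q.1.2 q.2)
      (f := fun p : Θ × 𝓧 × 𝓐 × ℝ => ((p.1, p.2.1), p.2.2.1)) (by fun_prop)
  have h2 : Measurable fun p : Θ × 𝓧 × 𝓐 × ℝ => S.μb p.2.1 p.2.2.1 :=
    hμ.comp (g := fun q : 𝓧 × 𝓐 => S.μb q.1 q.2)
      (f := fun p : Θ × 𝓧 × 𝓐 × ℝ => (p.2.1, p.2.2.1)) (by fun_prop)
  unfold ixTerm
  exact (h1.mul (by fun_prop)).div (h2.add_const γ)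

/-- Conditionally on the context, `E[exp (-2γ Z)] ≤ 1 - 2γ Σ π r + 4γ² Σ π r / (μ + γ)` for the IX
estimate `Z`. One `2γ² Σ π r / (μ + γ)` pays for the bias of `Z`, the other for its second moment.
The bound is recorded to be nonnegative, so that `ENNReal.ofReal` does not truncate it. -/
lemma ix_conditional_laplace_le (S : CBSetup 𝓧 𝓐) {γ : ℝ} (hγ : 0 < γ) {π : 𝓧 → 𝓐 → ℝ}
    (hπ : IsPolicy π) (x : 𝓧) :
    0 ≤ 1 - 2 * γ * (∑ a, π x a * S.r x a) +
        4 * γ ^ 2 * ∑ a, π x a * S.r x a / (S.μb x a + γ) ∧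
    ∑ a, ENNReal.ofReal (S.μb x a) *
        ∫⁻ ρ, ENNReal.ofReal (Real.exp (-(2 * γ * ixTerm S γ π (x, a, ρ)))) ∂(S.rker x a) ≤
      ENNReal.ofReal (1 - 2 * γ * (∑ a, π x a * S.r x a) +
        4 * γ ^ 2 * ∑ a, π x a * S.r x a / (S.μb x a + γ)) := by
  have hterm : ∀ a, ENNReal.ofReal (S.μb x a) *
      ∫⁻ ρ, ENNReal.ofReal (Real.exp (-(2 * γ * ixTerm S γ π (x, a, ρ)))) ∂(S.rker x a) ≤
      ENNReal.ofReal (S.μb x a) * ENNReal.ofReal (1 - (2 * γ * π x a / (S.μb x a + γ)) * S.r x a +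
        (2 * γ * π x a / (S.μb x a + γ)) ^ 2 / 2 * S.r x a) := fun a => by
    have hμ := S.μb_nonneg x a
    have hp := hπ.1 x a
    have hc : 0 ≤ 2 * γ * π x a / (S.μb x a + γ) := by positivity
    gcongr
    refine le_trans (le_of_eq ?_) (lintegral_exp_neg_reward_le S x a hc)
    refine lintegral_congr fun ρ => ?_
    simp only [ixTerm]
    ring_nf
  have hnn : ∀ a, 0 ≤ 1 - (2 * γ * π x a / (S.μb x a + γ)) * S.r x a +
        (2 * γ * π x a / (S.μb x a + γ)) ^ 2 / 2 * S.r x a := fun a => by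
    have hr := r_mem_Icc S x a
    -- affine in `r`, with values `1` and `(1 + (1 - c)²) / 2` at the endpoints
    nlinarith [mul_nonneg hr.1 (sq_nonneg (1 - 2 * γ * π x a / (S.μb x a + γ))), hr.1, hr.2]
  have hreal : ∑ a, S.μb x a * (1 - (2 * γ * π x a / (S.μb x a + γ)) * S.r x a +
        (2 * γ * π x a / (S.μb x a + γ)) ^ 2 / 2 * S.r x a) ≤
      1 - 2 * γ * (∑ a, π x a * S.r x a) +
        4 * γ ^ 2 * ∑ a, π x a * S.r x a / (S.μb x a + γ) := by
    have hone : (1 : ℝ) - 2 * γ * (∑ a, π x a * S.r x a) +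
        4 * γ ^ 2 * ∑ a, π x a * S.r x a / (S.μb x a + γ) =
        ∑ a, (S.μb x a - 2 * γ * (π x a * S.r x a) +
          4 * γ ^ 2 * (π x a * S.r x a / (S.μb x a + γ))) := by
      rw [Finset.sum_add_distrib, Finset.sum_sub_distrib, S.μb_sum_one x, Finset.mul_sum,
        Finset.mul_sum]
    rw [hone]
    refine Finset.sum_le_sum fun a _ => ?_
    have hμ := S.μb_nonneg x a
    have hp := hπ.1 x a
    have hp1 := hπ.le_one x a
    have hr := (r_mem_Icc S x a).1
    have hpos : 0 < S.μb x a + γ := by linarith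
    generalize S.μb x a = m at *
    generalize π x a = p at *
    generalize S.r x a = r at *
    have key : m - 2 * γ * (p * r) + 4 * γ ^ 2 * (p * r / (m + γ)) -
        m * (1 - 2 * γ * p / (m + γ) * r + (2 * γ * p / (m + γ)) ^ 2 / 2 * r) =
        2 * γ ^ 2 * (p * r) * (γ + m * (1 - p)) / (m + γ) ^ 2 := by
      field_simp
      ring
    have : 0 ≤ 2 * γ ^ 2 * (p * r) * (γ + m * (1 - p)) / (m + γ) ^ 2 := by
      have := sub_nonneg.2 hp1
      positivity
    linarith
  refine ⟨(Finset.sum_nonneg fun a _ => mul_nonneg (S.μb_nonneg x a) (hnn a)).trans hreal, ?_⟩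
  refine (Finset.sum_le_sum fun a _ => hterm a).trans ?_
  simp_rw [← ENNReal.ofReal_mul (S.μb_nonneg x _)]
  rw [← ENNReal.ofReal_sum_of_nonneg fun a _ => mul_nonneg (S.μb_nonneg x a) (hnn a)]
  exact ENNReal.ofReal_le_ofReal hreal

/-- The exponential moment bound for one observation, obtained from the conditional one by averaging
over the context and using `1 + u ≤ exp u`. -/
lemma ix_exp_moment_le_one (S : CBSetup 𝓧 𝓐) {γ : ℝ} (hγ : 0 < γ) {π : 𝓧 → 𝓐 → ℝ}
    (hπ : IsPolicy π) :
    ∫⁻ ω, ENNReal.ofReal (Real.exp (2 * γ * (pval S π - ixTerm S γ π ω) -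
      4 * γ ^ 2 * covγ S γ π)) ∂(obsLaw S) ≤ 1 := by
  have := S.ν_prob
  have hZ : Measurable (ixTerm S γ π) := by
    have h := measurable_ixTerm_param S (Θ := Unit) (pf := fun _ => π)
      (fun a => (hπ.2.2 a).comp measurable_snd) γ
    exact h.comp (measurable_const (a := ()) |>.prodMk measurable_id)
  set u := 2 * γ * pval S π - 4 * γ ^ 2 * covγ S γ π with hu
  have hsplit : ∀ ω, ENNReal.ofReal (Real.exp (2 * γ * (pval S π - ixTerm S γ π ω) -
      4 * γ ^ 2 * covγ S γ π)) = ENNReal.ofReal (Real.exp u) *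
        ENNReal.ofReal (Real.exp (-(2 * γ * ixTerm S γ π ω))) := fun ω => by
    rw [← ENNReal.ofReal_mul (Real.exp_pos _).le, ← Real.exp_add]
    congr 2
    rw [hu]
    ring
  have hm : Measurable fun ω => ENNReal.ofReal (Real.exp (-(2 * γ * ixTerm S γ π ω))) := by
    fun_prop
  simp_rw [hsplit]
  rw [lintegral_const_mul _ hm, lintegral_obsLaw S hm]
  have hiv := integrable_value_integrand S hπ
  have hic := integrable_cov_integrand S hγ hπ
  have hbound : ∫⁻ x, ∑ a, ENNReal.ofReal (S.μb x a) *
        ∫⁻ ρ, ENNReal.ofReal (Real.exp (-(2 * γ * ixTerm S γ π (x, a, ρ)))) ∂(S.rker x a) ∂S.ν ≤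
      ENNReal.ofReal (Real.exp (-u)) := by
    refine (lintegral_mono fun x => (ix_conditional_laplace_le S hγ hπ x).2).trans ?_
    have h1 : Integrable (fun x => 1 - 2 * γ * ∑ a, π x a * S.r x a) S.ν :=
      (integrable_const _).sub (hiv.const_mul _)
    have h2 : Integrable (fun x => 4 * γ ^ 2 * ∑ a, π x a * S.r x a / (S.μb x a + γ)) S.ν :=
      hic.const_mul _
    have h12 : Integrable (fun x => 1 - 2 * γ * ∑ a, π x a * S.r x a +
        4 * γ ^ 2 * ∑ a, π x a * S.r x a / (S.μb x a + γ)) S.ν := h1.add h2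
    rw [← ofReal_integral_eq_lintegral_ofReal h12
      (ae_of_all _ fun x => (ix_conditional_laplace_le S hγ hπ x).1)]
    refine ENNReal.ofReal_le_ofReal ?_
    rw [integral_add h1 h2, integral_sub (integrable_const _) (hiv.const_mul _),
      integral_const_mul, integral_const_mul]
    have h3 := Real.add_one_le_exp (-u)
    simp only [integral_const, probReal_univ, smul_eq_mul, one_mul]
    unfold pval covγ at hu
    linarith
  calc _ ≤ ENNReal.ofReal (Real.exp u) * ENNReal.ofReal (Real.exp (-u)) := by gcongr
    _ = 1 := by rw [← ENNReal.ofReal_mul (Real.exp_pos _).le, ← Real.exp_add]; simp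

/-! ### Averaging over the prior and over the sample -/

/-- The exponent contributed by one observation `ω`: `2γ (v(π) - r̃(π)) - 4γ² C_γ(π)`. -/
noncomputable def ixExponent (S : CBSetup 𝓧 𝓐) (γ : ℝ) (π : 𝓧 → 𝓐 → ℝ) (ω : 𝓧 × 𝓐 × ℝ) : ℝ :=
  2 * γ * (pval S π - ixTerm S γ π ω) - 4 * γ ^ 2 * covγ S γ π

lemma measurable_pval_param (S : CBSetup 𝓧 𝓐) {Θ : Type*} [MeasurableSpace Θ]
    {pf : Θ → 𝓧 → 𝓐 → ℝ} (hpfm : ∀ a, Measurable fun q : Θ × 𝓧 => pf q.1 q.2 a) :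
    Measurable fun θ => pval S (pf θ) := by
  have := S.ν_prob
  have h : Measurable fun q : Θ × 𝓧 => ∑ a, pf q.1 q.2 a * S.r q.2 a :=
    Finset.measurable_sum _ fun a _ => (hpfm a).mul ((S.r_meas a).comp measurable_snd)
  exact h.stronglyMeasurable.integral_prod_right'.measurable

lemma measurable_covγ_param (S : CBSetup 𝓧 𝓐) {Θ : Type*} [MeasurableSpace Θ]
    {pf : Θ → 𝓧 → 𝓐 → ℝ} (hpfm : ∀ a, Measurable fun q : Θ × 𝓧 => pf q.1 q.2 a) (γ : ℝ) :
    Measurable fun θ => covγ S γ (pf θ) := by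
  have := S.ν_prob
  have h : Measurable fun q : Θ × 𝓧 => ∑ a, pf q.1 q.2 a * S.r q.2 a / (S.μb q.2 a + γ) :=
    Finset.measurable_sum _ fun a _ => ((hpfm a).mul ((S.r_meas a).comp measurable_snd)).div
      (((S.μb_meas a).comp measurable_snd).add_const γ)
  exact h.stronglyMeasurable.integral_prod_right'.measurable

lemma measurable_ixExponent_param (S : CBSetup 𝓧 𝓐) {Θ : Type*} [MeasurableSpace Θ]
    {pf : Θ → 𝓧 → 𝓐 → ℝ} (hpfm : ∀ a, Measurable fun q : Θ × 𝓧 => pf q.1 q.2 a) (γ : ℝ) :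
    Measurable fun p : Θ × 𝓧 × 𝓐 × ℝ => ixExponent S γ (pf p.1) p.2 := by
  have hv : Measurable fun p : Θ × 𝓧 × 𝓐 × ℝ => pval S (pf p.1) :=
    (measurable_pval_param S hpfm).comp measurable_fst
  have hC : Measurable fun p : Θ × 𝓧 × 𝓐 × ℝ => covγ S γ (pf p.1) :=
    (measurable_covγ_param S hpfm γ).comp measurable_fst
  exact ((hv.sub (measurable_ixTerm_param S hpfm γ)).const_mul _).sub (hC.const_mul _)

lemma abs_ixTerm_le (S : CBSetup 𝓧 𝓐) {γ : ℝ} (hγ : 0 < γ) {π : 𝓧 → 𝓐 → ℝ} (hπ : IsPolicy π)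
    (ω : 𝓧 × 𝓐 × ℝ) : |ixTerm S γ π ω| ≤ |ω.2.2| / γ := by
  have hμ := S.μb_nonneg ω.1 ω.2.1
  have hden : 0 < S.μb ω.1 ω.2.1 + γ := by linarith
  rw [ixTerm, abs_div, abs_mul, abs_of_nonneg (hπ.1 _ _), abs_of_pos hden]
  exact div_le_div₀ (abs_nonneg _)
    (mul_le_of_le_one_left (abs_nonneg _) (hπ.le_one _ _)) hγ (by linarith)

/-- By independence, the exponential moment of the whole sample is at most one. -/
lemma ix_sample_exp_moment_le_one (S : CBSetup 𝓧 𝓐) {γ : ℝ} (hγ : 0 < γ) {π : 𝓧 → 𝓐 → ℝ}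
    (hπ : IsPolicy π) (n : ℕ) :
    ∫⁻ D, ENNReal.ofReal (Real.exp (∑ t, ixExponent S γ π (D t))) ∂(dataLaw S n) ≤ 1 := by
  have := isProbabilityMeasure_obsLaw S
  have hm : Measurable fun ω => ENNReal.ofReal (Real.exp (ixExponent S γ π ω)) := by
    have h := (measurable_ixExponent_param S (Θ := Unit) (pf := fun _ => π)
      (fun a => (hπ.2.2 a).comp measurable_snd) γ).comp
        (measurable_const (a := ()) |>.prodMk measurable_id)
    exact h.exp.ennreal_ofReal
  have hprod : ∀ D : Fin n → 𝓧 × 𝓐 × ℝ,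
      ENNReal.ofReal (Real.exp (∑ t, ixExponent S γ π (D t))) =
        ∏ t, ENNReal.ofReal (Real.exp (ixExponent S γ π (D t))) := fun D => by
    rw [Real.exp_sum, ENNReal.ofReal_prod_of_nonneg fun _ _ => (Real.exp_pos _).le]
  simp_rw [hprod]
  rw [dataLaw, lintegral_prod_eq_prod_lintegral_of_indepFun _
    (fun t (D : Fin n → 𝓧 × 𝓐 × ℝ) => ENNReal.ofReal (Real.exp (ixExponent S γ π (D t))))
    (iIndepFun_pi (X := fun _ ω => ENNReal.ofReal (Real.exp (ixExponent S γ π ω)))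
      fun _ => hm.aemeasurable)
    fun t => hm.comp (measurable_pi_apply t)]
  refine Finset.prod_le_one' fun t _ => ?_
  rw [(measurePreserving_eval (fun _ : Fin n => obsLaw S) t).lintegral_comp hm]
  exact ix_exp_moment_le_one S hγ hπ

/-- The exponent `F θ D` of the whole sample, `2γn (v(π_θ) - ṽ_n(π_θ)) - 4γ²n C_γ(π_θ)`. -/
noncomputable def sampleExponent (S : CBSetup 𝓧 𝓐) {Θ : Type*} (pf : Θ → 𝓧 → 𝓐 → ℝ) (γ : ℝ)
    {n : ℕ} (θ : Θ) (D : Fin n → 𝓧 × 𝓐 × ℝ) : ℝ :=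
  ∑ t, ixExponent S γ (pf θ) (D t)

/-- The mixture `M D = ∫ exp (F θ D) dP(θ)` over the prior, which controls all posteriors at once. -/
noncomputable def priorMixture (S : CBSetup 𝓧 𝓐) {Θ : Type*} [MeasurableSpace Θ]
    (pf : Θ → 𝓧 → 𝓐 → ℝ) (γ : ℝ) (P : Measure Θ) {n : ℕ} (D : Fin n → 𝓧 × 𝓐 × ℝ) : ENNReal :=
  ∫⁻ θ, ENNReal.ofReal (Real.exp (sampleExponent S pf γ θ D)) ∂P

lemma measurable_sampleExponent (S : CBSetup 𝓧 𝓐) {Θ : Type*} [MeasurableSpace Θ]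
    {pf : Θ → 𝓧 → 𝓐 → ℝ} (hpfm : ∀ a, Measurable fun q : Θ × 𝓧 => pf q.1 q.2 a) (γ : ℝ) (n : ℕ) :
    Measurable fun p : Θ × (Fin n → 𝓧 × 𝓐 × ℝ) => sampleExponent S pf γ p.1 p.2 := by
  unfold sampleExponent
  refine Finset.measurable_sum _ fun t _ => ?_
  have h : Measurable fun p : Θ × (Fin n → 𝓧 × 𝓐 × ℝ) => (p.1, p.2 t) := by fun_prop
  exact (measurable_ixExponent_param S hpfm γ).comp h

lemma measurable_priorMixture (S : CBSetup 𝓧 𝓐) {Θ : Type*} [MeasurableSpace Θ]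
    {pf : Θ → 𝓧 → 𝓐 → ℝ} (hpfm : ∀ a, Measurable fun q : Θ × 𝓧 => pf q.1 q.2 a) (γ : ℝ) (n : ℕ)
    (P : Measure Θ) [IsProbabilityMeasure P] :
    Measurable fun D : Fin n → 𝓧 × 𝓐 × ℝ => priorMixture S pf γ P D :=
  (measurable_sampleExponent S hpfm γ n).exp.ennreal_ofReal.lintegral_prod_left'

lemma isProbabilityMeasure_dataLaw (S : CBSetup 𝓧 𝓐) (n : ℕ) :
    IsProbabilityMeasure (dataLaw S n) := by
  have := isProbabilityMeasure_obsLaw S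
  unfold dataLaw
  infer_instance

lemma lintegral_priorMixture_le_one (S : CBSetup 𝓧 𝓐) {Θ : Type*} [MeasurableSpace Θ]
    {pf : Θ → 𝓧 → 𝓐 → ℝ} (hpf : ∀ θ, IsPolicy (pf θ))
    (hpfm : ∀ a, Measurable fun q : Θ × 𝓧 => pf q.1 q.2 a) {γ : ℝ} (hγ : 0 < γ) (n : ℕ)
    (P : Measure Θ) [IsProbabilityMeasure P] :
    ∫⁻ D, priorMixture S pf γ P D ∂(dataLaw S n) ≤ 1 := by
  have := isProbabilityMeasure_dataLaw S n
  have hm := (measurable_sampleExponent S hpfm γ n).exp.ennreal_ofReal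
  have hswap : ∫⁻ D, priorMixture S pf γ P D ∂(dataLaw S n) =
      ∫⁻ θ, ∫⁻ D, ENNReal.ofReal (Real.exp (sampleExponent S pf γ θ D)) ∂(dataLaw S n) ∂P :=
    (lintegral_lintegral_swap hm.aemeasurable).symm
  rw [hswap]
  calc _ ≤ ∫⁻ _, 1 ∂P := lintegral_mono fun θ => ix_sample_exp_moment_le_one S hγ (hpf θ) n
    _ = 1 := by simp

/-- On the event `M D < 1/δ`, the change of measure inequality gives the bound for every posterior
`Q` of finite relative entropy. -/
lemma pac_bayes_of_priorMixture_lt (S : CBSetup 𝓧 𝓐) {Θ : Type*} [MeasurableSpace Θ]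
    {pf : Θ → 𝓧 → 𝓐 → ℝ} (hpf : ∀ θ, IsPolicy (pf θ))
    (hpfm : ∀ a, Measurable fun q : Θ × 𝓧 => pf q.1 q.2 a) {n : ℕ} (hn : 0 < n)
    {γ δ : ℝ} (hγ : 0 < γ) (hδ0 : 0 < δ) {P Q : Measure Θ} [IsProbabilityMeasure P]
    [IsProbabilityMeasure Q] (hKL : KLFinite Q P) {D : Fin n → 𝓧 × 𝓐 × ℝ}
    (hD : priorMixture S pf γ P D < ENNReal.ofReal (1 / δ)) :
    (∫ θ, pval S (pf θ) ∂Q) - (∫ θ, ixEst S γ (pf θ) D ∂Q) ≤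
      (klReal Q P + Real.log (1 / δ)) / (2 * γ * n) + 2 * γ * ∫ θ, covγ S γ (pf θ) ∂Q := by
  -- for fixed data `D`, everything is a bounded measurable function of `θ`
  have hZm : ∀ t, Measurable fun θ => ixTerm S γ (pf θ) (D t) := fun t =>
    (measurable_ixTerm_param S hpfm γ).comp (measurable_id.prodMk measurable_const)
  have hZb : ∀ t θ, |ixTerm S γ (pf θ) (D t)| ≤ |(D t).2.2| / γ := fun t θ =>
    abs_ixTerm_le S hγ (hpf θ) (D t)
  have hvi : Integrable (fun θ => pval S (pf θ)) Q :=
    Integrable.of_mem_Icc 0 1 (measurable_pval_param S hpfm).aemeasurable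
      (ae_of_all _ fun θ => pval_mem_Icc S (hpf θ))
  have hCi : Integrable (fun θ => covγ S γ (pf θ)) Q :=
    Integrable.of_mem_Icc 0 (1 / γ) (measurable_covγ_param S hpfm γ).aemeasurable
      (ae_of_all _ fun θ => covγ_mem_Icc S hγ (hpf θ))
  have hEi : Integrable (fun θ => ixEst S γ (pf θ) D) Q :=
    (integrable_finsetSum _ fun t _ => Integrable.of_bound (hZm t).aestronglyMeasurable _
      (ae_of_all _ fun θ => by simpa using hZb t θ)).div_const _
  have hn' : (0 : ℝ) < n := by exact_mod_cast hn
  have hFeq : ∀ θ, sampleExponent S pf γ θ D = 2 * γ * n * (pval S (pf θ) - ixEst S γ (pf θ) D) -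
      4 * γ ^ 2 * n * covγ S γ (pf θ) := fun θ => by
    simp only [sampleExponent, ixExponent, ixEst, Finset.sum_sub_distrib, ← Finset.mul_sum, Finset.sum_const,
      Finset.card_univ, Fintype.card_fin, nsmul_eq_mul]
    field_simp
  have hdi : Integrable (fun θ => 2 * γ * n * (pval S (pf θ) - ixEst S γ (pf θ) D)) Q :=
    (hvi.sub hEi).const_mul _
  have hFi : Integrable (fun θ => sampleExponent S pf γ θ D) Q := by
    simp_rw [hFeq]
    exact hdi.sub (hCi.const_mul _)
  have hFval : ∫ θ, sampleExponent S pf γ θ D ∂Q = 2 * γ * n * ((∫ θ, pval S (pf θ) ∂Q) -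
      ∫ θ, ixEst S γ (pf θ) D ∂Q) - 4 * γ ^ 2 * n * ∫ θ, covγ S γ (pf θ) ∂Q := by
    simp_rw [hFeq]
    rw [integral_sub hdi (hCi.const_mul _), integral_const_mul, integral_const_mul,
      integral_sub hvi hEi]
  have hexpm : Measurable fun θ => Real.exp (sampleExponent S pf γ θ D) :=
    ((measurable_sampleExponent S hpfm γ n).comp (measurable_id.prodMk measurable_const)).exp
  -- finiteness of the mixture gives integrability of the exponential under the prior
  have hexpi : Integrable (fun θ => Real.exp (sampleExponent S pf γ θ D)) P := by
    refine ⟨hexpm.aestronglyMeasurable, ?_⟩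
    rw [hasFiniteIntegral_iff_ofReal (ae_of_all _ fun θ => (Real.exp_pos _).le)]
    exact hD.trans ENNReal.ofReal_lt_top
  have hI : ∫ θ, Real.exp (sampleExponent S pf γ θ D) ∂P ≤ 1 / δ := by
    have hle : ENNReal.ofReal (∫ θ, Real.exp (sampleExponent S pf γ θ D) ∂P) ≤ ENNReal.ofReal (1 / δ) := by
      rw [ofReal_integral_eq_lintegral_ofReal hexpi (ae_of_all _ fun θ => (Real.exp_pos _).le)]
      exact hD.le
    exact (ENNReal.ofReal_le_ofReal_iff (by positivity)).1 hle
  have hDV := donsker_varadhan hKL hFi hexpi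
  have hlog : Real.log (∫ θ, Real.exp (sampleExponent S pf γ θ D) ∂P) ≤ Real.log (1 / δ) :=
    Real.log_le_log (integral_exp_pos hexpi) hI
  rw [hFval] at hDV
  have hpos : 0 < 2 * γ * n := by positivity
  rw [← sub_le_iff_le_add, le_div_iff₀ hpos]
  linarith

/-- Lemma 4, PAC-Bayesian lower tail: with probability at least `1-δ`,
simultaneously for all distributions `Q` over the policy class (those with infinite
`KL(Q‖P)` satisfy the bound vacuously),
`v(Q) - ṽ_n(Q) ≤ (KL(Q‖P) + log(1/δ))/(2γn) + 2γ C_γ(Q)`. -/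
theorem ix_lower_tail_pac_bayes
    (S : CBSetup 𝓧 𝓐) {Θ : Type*} [MeasurableSpace Θ]
    (pf : Θ → 𝓧 → 𝓐 → ℝ) (hpf : ∀ θ, IsPolicy (pf θ))
    (hpfm : ∀ a, Measurable fun q : Θ × 𝓧 => pf q.1 q.2 a)
    {n : ℕ} (hn : 0 < n) (γ δ : ℝ) (hγ : 0 < γ) (hδ0 : 0 < δ) (hδ1 : δ < 1)
    (P : Measure Θ) (hP : IsProbabilityMeasure P) :
    ENNReal.ofReal (1 - δ) ≤
      dataLaw S n {D : Fin n → 𝓧 × 𝓐 × ℝ |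
        ∀ Q : Measure Θ, IsProbabilityMeasure Q → KLFinite Q P →
          (∫ θ, pval S (pf θ) ∂Q) - (∫ θ, ixEst S γ (pf θ) D ∂Q) ≤
            (klReal Q P + Real.log (1 / δ)) / (2 * γ * n) +
              2 * γ * ∫ θ, covγ S γ (pf θ) ∂Q} := by
  have := isProbabilityMeasure_dataLaw S n
  have hMm := measurable_priorMixture S hpfm γ n P
  -- the good event depends on `P` only and is measurable, unlike the event of the statement
  let G : Set (Fin n → 𝓧 × 𝓐 × ℝ) := {D | priorMixture S pf γ P D < ENNReal.ofReal (1 / δ)}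
  have hGm : MeasurableSet G := measurableSet_lt hMm measurable_const
  have hGc : dataLaw S n Gᶜ ≤ ENNReal.ofReal δ := by
    have hmk := (mul_meas_ge_le_lintegral (μ := dataLaw S n) hMm (ENNReal.ofReal (1 / δ))).trans
      (lintegral_priorMixture_le_one S hpf hpfm hγ n P)
    have hset : Gᶜ = {D | ENNReal.ofReal (1 / δ) ≤ priorMixture S pf γ P D} := by
      ext D
      simp only [G, Set.mem_compl_iff, Set.mem_setOf_eq, not_lt]
    rw [← hset] at hmk
    calc dataLaw S n Gᶜ
        = ENNReal.ofReal δ * (ENNReal.ofReal (1 / δ) * dataLaw S n Gᶜ) := by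
          rw [← mul_assoc, ← ENNReal.ofReal_mul hδ0.le, mul_one_div_cancel hδ0.ne',
            ENNReal.ofReal_one, one_mul]
      _ ≤ ENNReal.ofReal δ * 1 := by gcongr
      _ = ENNReal.ofReal δ := mul_one _
  have hG : ENNReal.ofReal (1 - δ) ≤ dataLaw S n G := by
    rw [ENNReal.ofReal_sub _ hδ0.le, ENNReal.ofReal_one, tsub_le_iff_right,
      ← prob_add_prob_compl (μ := dataLaw S n) hGm]
    gcongr
  exact hG.trans (measure_mono fun D hD Q hQ hKL =>
    pac_bayes_of_priorMixture_lt S hpf hpfm hn hγ hδ0 hKL hD)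
end

section
/- Pointwise domination of the IX reward estimate by a logarithmic transform of the importance-weighted estimate: for any γ > 0, any probabilities p, m ∈ [0,1] with m > 0 when needed, and any reward value R ∈ [0,1], it holds that p·R/(m+γ) ≤ log(1 + 2γ·(p·R/m)) / (2γ). In particular, for every t and every policy π, r̃_t(π) ≤ log(1 + 2γ·r̂_t(π))/(2γ), where r̂_t(π) = π(A_t|X_t)R_t/μ(A_t|X_t) and r̃_t(π) = π(A_t|X_t)R_t/(μ(A_t|X_t)+γ). -/
/-!
With `q = p R ∈ [0,1]`, the bound `m + γ ≥ m + γ q` gives `2γ q / (m + γ) ≤ 2γ q / (m + γ q)`.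
The right-hand side equals `y / (1 + y / 2)` for `y = 2γ q / m`, which is at most `log (1 + y)`
(`Real.le_log_one_add_of_nonneg`). The claim about policies is the instance `p = π(A|X)`,
`m = μ(A|X)`.
-/

open MeasureTheory ProbabilityTheory

variable {𝓧 𝓐 : Type*} [MeasurableSpace 𝓧] [Fintype 𝓐] [MeasurableSpace 𝓐]
  [MeasurableSingletonClass 𝓐]

/-- The importance-weighted reward estimate `r̂(π) = π(A|X) R / μ(A|X)` for one observation. -/
noncomputable def iwTerm (S : CBSetup 𝓧 𝓐) (π : 𝓧 → 𝓐 → ℝ) (ω : 𝓧 × 𝓐 × ℝ) : ℝ :=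
  π ω.1 ω.2.1 * ω.2.2 / S.μb ω.1 ω.2.1

/-- pointwise domination of the IX reward estimate by a logarithmic
transform of the importance-weighted estimate: `p·R/(m+γ) ≤ log(1 + 2γ(p·R/m))/(2γ)` for
probabilities `p, m ∈ [0,1]` (with `m > 0`) and rewards `R ∈ [0,1]`; in particular,
`r̃_t(π) ≤ log(1 + 2γ r̂_t(π))/(2γ)` for every observation with positive behavior
probability. -/
theorem ix_le_log_iw {𝓧 𝓐 : Type*} [MeasurableSpace 𝓧] [Fintype 𝓐] [MeasurableSpace 𝓐]
    (γ : ℝ) (hγ : 0 < γ) :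
    (∀ p m R : ℝ, 0 ≤ p → p ≤ 1 → 0 < m → m ≤ 1 → 0 ≤ R → R ≤ 1 →
      p * R / (m + γ) ≤ Real.log (1 + 2 * γ * (p * R / m)) / (2 * γ)) ∧
    (∀ (S : CBSetup 𝓧 𝓐) (π : 𝓧 → 𝓐 → ℝ), IsPolicy π →
      ∀ ω : 𝓧 × 𝓐 × ℝ, 0 < S.μb ω.1 ω.2.1 → ω.2.2 ∈ Set.Icc (0:ℝ) 1 →
        ixTerm S γ π ω ≤ Real.log (1 + 2 * γ * iwTerm S π ω) / (2 * γ)) := by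
  have key : ∀ p m R : ℝ, 0 ≤ p → p ≤ 1 → 0 < m → m ≤ 1 → 0 ≤ R → R ≤ 1 →
      p * R / (m + γ) ≤ Real.log (1 + 2 * γ * (p * R / m)) / (2 * γ) := by
    intro p m R hp0 hp1 hm _ hR0 hR1
    have hq0 : 0 ≤ p * R := mul_nonneg hp0 hR0
    have hq1 : p * R ≤ 1 := mul_le_one₀ hp1 hR0 hR1
    generalize p * R = q at hq0 hq1 ⊢
    -- `log (1 + y) ≥ 2 y / (y + 2)` at `y = 2 γ q / m`
    have hlog := Real.le_log_one_add_of_nonneg (x := 2 * γ * (q / m)) (by positivity)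
    rw [le_div_iff₀ (by positivity)]
    calc q / (m + γ) * (2 * γ) ≤ q / (m + γ * q) * (2 * γ) := by
          gcongr
          exact mul_le_of_le_one_right hγ.le hq1
      _ = 2 * (2 * γ * (q / m)) / (2 * γ * (q / m) + 2) := by
          field_simp
          ring
      _ ≤ Real.log (1 + 2 * γ * (q / m)) := hlog
  refine ⟨key, fun S π hπ ω hμ hR => ?_⟩
  obtain ⟨hπ0, hπ1, -⟩ := hπ
  -- each probability is one term of a nonnegative sum equal to `1`
  have hp1 : π ω.1 ω.2.1 ≤ 1 := (hπ1 ω.1).symm ▸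
    Finset.single_le_sum (fun a _ => hπ0 ω.1 a) (Finset.mem_univ ω.2.1)
  have hm1 : S.μb ω.1 ω.2.1 ≤ 1 := (S.μb_sum_one ω.1).symm ▸
    Finset.single_le_sum (fun a _ => S.μb_nonneg ω.1 a) (Finset.mem_univ ω.2.1)
  exact key _ _ _ (hπ0 _ _) hp1 hμ hm1 hR.1 hR.2
end
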